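/- Let q be a prime power, let F_q ⊆ F_{q^m} be finite fields, and let c ≤ s < q be positive integers. For a basis 𝔞 = (a_1,...,a_m) of F_{q^m} over F_q, let γ_𝔞(T) = (γ_1(T),...,γ_m(T)) with γ_k(T) = Σ_{i=0}^{m−1} a_k^{q^i}·T^{q^i} ∈ F_{q^m}[T]. Let 𝔞_1,...,𝔞_M ∈ F_{q^m}^m be bases of F_{q^m} over F_q in (s,c)-general position, meaning there is no nonzero polynomial R ∈ F_{q^m}[X_1,...,X_m] of total degree at most s which vanishes at every 𝔞_i with multiplicity at least c. Let Q ∈ F_{q^m}[X_1,...,X_m] have total degree < s·q, and suppose that for each i ∈ {1,...,M} and each vector l of nonnegative integers with wt(l) < c, the univariate polynomial Q^{(l)}(γ_{𝔞_i}(T)) ∈ F_{q^m}[T] is identically zero. Then Q = 0. -/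

import Mathlib

/-- The Hasse derivative of a multivariate polynomial `P` with respect to the index
vector `i : Fin m → ℕ`: the coefficient of `Z^i` in `P(X + Z)`. -/
noncomputable def mvHasseDeriv {F : Type*} [CommSemiring F] {m : ℕ}
    (i : Fin m → ℕ) (P : MvPolynomial (Fin m) F) : MvPolynomial (Fin m) F :=
  MvPolynomial.coeff (Finsupp.equivFunOnFinite.symm i)
    (MvPolynomial.eval₂ (MvPolynomial.C.comp MvPolynomial.C)
      (fun k => MvPolynomial.C (MvPolynomial.X k) + MvPolynomial.X k) P)

/-- The multiplicity of `P` at a point `a`: the largest `M` (possibly `⊤`) such that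
all Hasse derivatives of `P` of weight `< M` vanish at `a`. -/
noncomputable def mvMult {F : Type*} [CommSemiring F] {m : ℕ}
    (P : MvPolynomial (Fin m) F) (a : Fin m → F) : ℕ∞ :=
  sSup {M : ℕ∞ | ∀ i : Fin m → ℕ, ((∑ k, i k : ℕ) : ℕ∞) < M →
    MvPolynomial.eval a (mvHasseDeriv i P) = 0}

open MvPolynomial in
/-- Translation `P(X) ↦ P(X + x)`. -/
noncomputable def rtcShift {K : Type*} [Field K] {m : ℕ} (x : Fin m → K) :
    MvPolynomial (Fin m) K →ₐ[K] MvPolynomial (Fin m) K :=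
  aeval (fun k => X k + C (x k))

/-- The univariate case: a polynomial of degree `< r·#S` vanishing to order `r` on `S` is zero. -/
theorem rtc_univ {K : Type*} [Field K] (S : Finset K) (r : ℕ) (P : Polynomial K)
    (hdeg : P.natDegree < r * S.card)
    (h : ∀ b ∈ S, ∀ j < r, (P.comp (Polynomial.X + Polynomial.C b)).coeff j = 0) : P = 0 := by
  have hdvd : (∏ b ∈ S, (Polynomial.X - Polynomial.C b) ^ r) ∣ P := by
    apply Finset.prod_dvd_of_coprime
    · intro a _ b _ hab
      exact (Polynomial.pairwise_coprime_X_sub_C (s := (id : K → K))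
        Function.injective_id hab).pow
    · intro b hb
      rw [Polynomial.X_sub_C_pow_dvd_iff, Polynomial.X_pow_dvd_iff]
      exact h b hb
  by_contra hP
  have h1 := Polynomial.natDegree_le_of_dvd hdvd hP
  rw [Polynomial.natDegree_prod _ _ (fun b _ => pow_ne_zero _ (Polynomial.X_sub_C_ne_zero b))] at h1
  simp only [Polynomial.natDegree_pow, Polynomial.natDegree_X_sub_C, mul_one, Finset.sum_const,
    smul_eq_mul] at h1
  rw [mul_comm] at h1
  omega

open MvPolynomial in
theorem rtc_finSucc_shift {K : Type*} [Field K] {n : ℕ} (a : Fin n → K) (b : K)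
    (Q : MvPolynomial (Fin (n + 1)) K) :
    finSuccEquiv K n (rtcShift (Fin.cons b a : Fin (n + 1) → K) Q) =
      ((finSuccEquiv K n Q).map (rtcShift a : MvPolynomial (Fin n) K →+* MvPolynomial (Fin n) K)).comp
        (Polynomial.X + Polynomial.C (C b)) := by
  induction Q using MvPolynomial.induction_on with
  | C c => simp [rtcShift, finSuccEquiv_apply, algebraMap_eq]
  | add p q hp hq => simp [hp, hq]
  | mul_X p k hp =>
    rw [map_mul, map_mul, hp, map_mul, Polynomial.map_mul, Polynomial.mul_comp]
    refine congrArg₂ _ rfl ?_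
    refine Fin.cases ?_ (fun k => ?_) k
    · rw [rtcShift, aeval_X, map_add, finSuccEquiv_X_zero, Polynomial.map_X, Polynomial.X_comp]
      simp [finSuccEquiv_apply]
    · rw [rtcShift, aeval_X, map_add, finSuccEquiv_X_succ, Polynomial.map_C, Polynomial.C_comp]
      simp [finSuccEquiv_apply, rtcShift]

open MvPolynomial in
theorem rtc_coeff_comp {K : Type*} [Field K] {n : ℕ} (b : K) (i : Fin n →₀ ℕ) (t l : ℕ)
    (R : Polynomial (MvPolynomial (Fin n) K)) (hR : R.natDegree ≤ t) :
    coeff i ((R.comp (Polynomial.X + Polynomial.C (C b))).coeff l) =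
    ((∑ j ∈ Finset.range (t + 1), Polynomial.monomial j (coeff i (R.coeff j))).comp
      (Polynomial.X + Polynomial.C b)).coeff l := by
  conv_lhs => rw [R.as_sum_range' (t + 1) (by omega)]
  simp only [Polynomial.sum_comp, Polynomial.finsetSum_coeff, coeff_sum,
    Polynomial.monomial_comp, Polynomial.coeff_C_mul, Polynomial.coeff_X_add_C_pow]
  refine Finset.sum_congr rfl fun j _ => ?_
  rw [← map_pow, ← map_natCast (C : K →+* MvPolynomial (Fin n) K), ← map_mul, mul_comm, coeff_C_mul, mul_comm]

open MvPolynomial in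
/-- Vanishing to order `s` on a grid `S^m` with degree `< s·#S` forces `Q = 0`. -/
theorem rtc_grid {K : Type*} [Field K] (S : Finset K) (hS : 0 < S.card) (m : ℕ) :
    ∀ (s : ℕ) (Q : MvPolynomial (Fin m) K), Q.totalDegree < s * S.card →
    (∀ x : Fin m → K, (∀ k, x k ∈ S) → ∀ i : Fin m →₀ ℕ, i.degree < s →
      coeff i (rtcShift x Q) = 0) → Q = 0 := by
  induction m with
  | zero =>
    intro s Q hdeg h
    have hs : 0 < s := by
      rcases Nat.eq_zero_or_pos s with h0 | h0
      · simp [h0] at hdeg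
      · exact h0
    have := h (fun k => k.elim0) (fun k => k.elim0) 0 (by simpa using hs)
    rw [eq_C_of_isEmpty Q] at this ⊢
    simp [rtcShift, algebraMap_eq] at this
    simp [this]
  | succ n ih =>
    intro s Q hdeg h
    by_contra hQ
    set R := finSuccEquiv K n Q with hRdef
    have hR0 : R ≠ 0 := by simpa [hRdef] using hQ
    set t := R.natDegree with ht
    have hlead : R.coeff t ≠ 0 := by
      simpa [ht] using hR0
    have hdt : (R.coeff t).totalDegree + t ≤ Q.totalDegree :=
      totalDegree_coeff_finSuccEquiv_add_le Q t hlead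
    apply hlead
    have hdiv := Nat.div_mul_le_self t S.card
    have hlt : t < (t / S.card + 1) * S.card := by
      have h1 := Nat.div_add_mod t S.card
      have h2 := Nat.mod_lt t hS
      rw [add_mul, mul_comm]
      omega
    apply ih (s - t / S.card)
    · rw [Nat.sub_mul]; omega
    · intro a ha i hi
      set P : Polynomial K := ∑ j ∈ Finset.range (t + 1),
        Polynomial.monomial j (coeff i ((R.map (rtcShift a :
          MvPolynomial (Fin n) K →+* MvPolynomial (Fin n) K)).coeff j)) with hP
      have hP0 : P = 0 := by
        apply rtc_univ S (s - i.degree)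
        · have h1 : P.natDegree ≤ t := by
            apply Polynomial.natDegree_sum_le_of_forall_le
            intro j hj
            exact (Polynomial.natDegree_monomial_le _).trans (by simp at hj; omega)
          have h2 : (t / S.card + 1) * S.card ≤ (s - i.degree) * S.card :=
            Nat.mul_le_mul_right _ (by omega)
          omega
        · intro b hb j hj
          rw [hP, ← rtc_coeff_comp b i t j _ (Polynomial.natDegree_map_le.trans le_rfl),
            ← rtc_finSucc_shift, finSuccEquiv_coeff_coeff]
          apply h
          · intro k
            refine Fin.cases ?_ (fun k => ?_) k
            · simpa using hb
            · simpa using ha k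
          · rw [Finsupp.degree_eq_sum, Fin.sum_univ_succ]
            rw [Finsupp.degree_eq_sum] at hj
            simp
            omega
      have h3 : P.coeff t = coeff i (rtcShift a (R.coeff t)) := by
        rw [hP]
        simp [Polynomial.finsetSum_coeff, Polynomial.coeff_monomial]
      rw [← h3, hP0, Polynomial.coeff_zero]

open MvPolynomial in
/-- `P(X + Z)` -/
noncomputable def rtcE {K : Type*} [Field K] {m : ℕ} :
    MvPolynomial (Fin m) K →+* MvPolynomial (Fin m) (MvPolynomial (Fin m) K) :=
  eval₂Hom (C.comp C) (fun k => C (X k) + X k)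

open MvPolynomial in
theorem rtc_hasse_eq {K : Type*} [Field K] {m : ℕ} (l : Fin m → ℕ) (P : MvPolynomial (Fin m) K) :
    mvHasseDeriv l P = coeff (Finsupp.equivFunOnFinite.symm l) (rtcE P) := rfl

open MvPolynomial in
theorem rtc_hasse_shift {K : Type*} [Field K] {m : ℕ} (l : Fin m → ℕ) (x : Fin m → K)
    (P : MvPolynomial (Fin m) K) :
    mvHasseDeriv l (rtcShift x P) = rtcShift x (mvHasseDeriv l P) := by
  have h : rtcE (rtcShift x P) =
      map (rtcShift x : MvPolynomial (Fin m) K →+* MvPolynomial (Fin m) K) (rtcE P) := by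
    induction P using MvPolynomial.induction_on with
    | C c => simp [rtcShift, rtcE, algebraMap_eq]
    | add p q hp hq => simp [hp, hq]
    | mul_X p k hp =>
      rw [map_mul, map_mul, hp, map_mul, map_mul]
      refine congrArg₂ _ rfl ?_
      simp only [rtcShift, rtcE, aeval_X, coe_eval₂Hom, eval₂_add, eval₂_X, eval₂_C, map_add,
        map_X, map_C, RingHom.coe_comp, Function.comp_apply, RingHom.coe_coe]
      ring
  rw [rtc_hasse_eq, rtc_hasse_eq, h, coeff_map]
  rfl

open MvPolynomial in
theorem rtc_E_monomial {K : Type*} [Field K] {m : ℕ} (n : Fin m →₀ ℕ) (a : K) :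
    ∀ l e : Fin m →₀ ℕ, e.degree + l.degree ≠ n.degree →
      coeff e (coeff l (rtcE (monomial n a))) = 0 := by
  classical
  have key : ∃ d, (monomial n a).IsHomogeneous d ∧ ∀ l e : Fin m →₀ ℕ, e.degree + l.degree ≠ d →
      coeff e (coeff l (rtcE (monomial n a))) = 0 := by
    refine MvPolynomial.induction_on_monomial (motive := fun p => ∃ d, p.IsHomogeneous d ∧
      ∀ l e : Fin m →₀ ℕ, e.degree + l.degree ≠ d → coeff e (coeff l (rtcE p)) = 0) ?_ ?_ n a
    · intro a
      refine ⟨0, isHomogeneous_C _ a, fun l e h => ?_⟩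
      simp only [rtcE, coe_eval₂Hom, eval₂_C, RingHom.coe_comp, Function.comp_apply, coeff_C]
      by_cases hl : 0 = l
      · have he : 0 ≠ e := by
          rintro rfl
          subst hl
          simp at h
        rw [if_pos hl, coeff_C, if_neg he]
      · rw [if_neg hl, coeff_zero]
    · intro p k hp
      obtain ⟨d, hd, hp⟩ := hp
      refine ⟨d + 1, hd.mul (isHomogeneous_X _ k), fun l e h => ?_⟩
      have hX : rtcE (X k : MvPolynomial (Fin m) K) = C (X k) + X k := by simp [rtcE]
      have hdeg : ∀ f : Fin m →₀ ℕ, k ∈ f.support →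
          (f - Finsupp.single k 1).degree + 1 = f.degree := by
        intro f hf
        have h1 : f - Finsupp.single k 1 + Finsupp.single k 1 = f := by
          apply tsub_add_cancel_of_le
          rw [Finsupp.single_le_iff]
          have := Finsupp.mem_support_iff.mp hf
          omega
        have h2 := congrArg Finsupp.degree h1
        simpa using h2
      rw [map_mul, hX, mul_add, coeff_add, coeff_add, mul_comm (rtcE p) (C (X k)), coeff_C_mul,
        mul_comm (X k) (coeff l (rtcE p)), coeff_mul_X', coeff_mul_X']
      have t1 : (if k ∈ e.support then
          coeff (e - Finsupp.single k 1) (coeff l (rtcE p)) else 0) = 0 := by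
        split_ifs with hk
        · exact hp _ _ (by have := hdeg e hk; omega)
        · rfl
      rw [t1, zero_add]
      split_ifs with hk
      · exact hp _ _ (by have := hdeg l hk; omega)
      · simp
  intro l e h
  by_cases ha : a = 0
  · simp [ha]
  obtain ⟨d, hd, hk⟩ := key
  have : d = n.degree := hd.inj_right (isHomogeneous_monomial a rfl) (by simpa using ha)
  exact hk l e (by omega)

open MvPolynomial in
theorem rtc_hasse_hom {K : Type*} [Field K] {m : ℕ} (l e : Fin m →₀ ℕ) (j : ℕ)
    (P : MvPolynomial (Fin m) K) :
    coeff e (coeff l (rtcE (homogeneousComponent j P))) =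
      if e.degree + l.degree = j then coeff e (coeff l (rtcE P)) else 0 := by
  induction P using MvPolynomial.induction_on' with
  | monomial n a =>
    rw [homogeneousComponent_of_mem (isHomogeneous_monomial a rfl)]
    split_ifs with h1 h2 h2
    · rfl
    · exact rtc_E_monomial n a l e (by omega)
    · rw [rtc_E_monomial n a l e (by omega)]; simp
    · simp
  | add p q hp hq =>
    simp only [map_add, coeff_add, hp, hq]
    split_ifs <;> simp

open MvPolynomial in
theorem rtc_coeff_line {K : Type*} [Field K] {m : ℕ} (a : Fin m → K) (j : ℕ)
    (P : MvPolynomial (Fin m) K) :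
    (aeval (fun k => Polynomial.C (a k) * Polynomial.X) P : Polynomial K).coeff j =
      eval a (homogeneousComponent j P) := by
  induction P using MvPolynomial.induction_on' with
  | monomial n c =>
    rw [homogeneousComponent_of_mem (isHomogeneous_monomial c rfl), aeval_monomial,
      Finsupp.prod_fintype _ _ (by simp)]
    simp only [mul_pow, Finset.prod_mul_distrib, ← map_pow, ← map_prod, Finset.prod_pow_eq_pow_sum,
      ← Polynomial.C_eq_algebraMap, ← mul_assoc, ← Polynomial.C_mul]
    rw [Polynomial.coeff_C_mul, Polynomial.coeff_X_pow, ← Finsupp.degree_eq_sum]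
    split_ifs with h
    · rw [eval_monomial, Finsupp.prod_fintype _ _ (by simp)]
      simp
    · simp
  | add p q hp hq => simp [hp, hq]

open MvPolynomial in
theorem rtc_dvd_aeval {K : Type*} [Field K] {m : ℕ} (d : Polynomial K) (f g : Fin m → Polynomial K)
    (h : ∀ k, d ∣ f k - g k) (P : MvPolynomial (Fin m) K) : d ∣ aeval f P - aeval g P := by
  induction P using MvPolynomial.induction_on with
  | C c => simp
  | add p q hp hq =>
    rw [map_add, map_add, add_sub_add_comm]
    exact dvd_add hp hq
  | mul_X p k hp =>
    rw [map_mul, map_mul, aeval_X, aeval_X]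
    have : aeval f p * f k - aeval g p * g k =
      (aeval f p - aeval g p) * f k + aeval g p * (f k - g k) := by ring
    rw [this]
    exact dvd_add (hp.mul_right _) ((h k).mul_left _)

/-- The trace curve coordinate. -/
noncomputable def rtcG {K : Type*} [Field K] (q m : ℕ) (a : K) : Polynomial K :=
  ∑ e ∈ Finset.range m, Polynomial.C (a ^ q ^ e) * Polynomial.X ^ q ^ e

theorem rtcG_comp (F : Type*) {K : Type*} [Field F] [Fintype F] [Field K] [Algebra F K]
    (m : ℕ) (a t : K) :
    (rtcG (Fintype.card F) m a).comp (Polynomial.X + Polynomial.C t) =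
      rtcG (Fintype.card F) m a +
        Polynomial.C (∑ e ∈ Finset.range m, (a * t) ^ Fintype.card F ^ e) := by
  obtain ⟨p, hp⟩ := CharP.exists F
  obtain ⟨n, hpp, hn⟩ := FiniteField.card F p
  have : Fact p.Prime := ⟨hpp⟩
  have : CharP K p := charP_of_injective_algebraMap (algebraMap F K).injective p
  simp only [rtcG, Polynomial.sum_comp, map_sum, ← Finset.sum_add_distrib]
  refine Finset.sum_congr rfl fun e _ => ?_
  simp only [Polynomial.mul_comp, Polynomial.C_comp, Polynomial.pow_comp, Polynomial.X_comp]
  rw [hn, ← pow_mul, add_pow_char_pow, mul_pow, map_mul, mul_add, map_pow Polynomial.C t]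

theorem rtcG_mod {K : Type*} [Field K] (q m : ℕ) (hm : 0 < m) (a : K) :
    (Polynomial.X : Polynomial K) ^ q ∣ rtcG q m a - Polynomial.C a * Polynomial.X := by
  obtain ⟨m, rfl⟩ := Nat.exists_eq_succ_of_ne_zero hm.ne'
  rw [rtcG, Finset.sum_range_succ']
  simp only [pow_zero, pow_one, add_sub_cancel_right]
  apply Finset.dvd_sum
  intro e _
  apply Dvd.dvd.mul_left
  apply pow_dvd_pow
  exact Nat.le_self_pow (by omega) q

theorem rtc_surj {F K : Type*} [Field F] [Fintype F] [Field K] [Fintype K] [Algebra F K] {m : ℕ}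
    (A : Fin m → K) (h1 : LinearIndependent F A) (h2 : Submodule.span F (Set.range A) = ⊤)
    (y : Fin m → F) : ∃ t : K, ∀ k,
      ∑ e ∈ Finset.range m, (A k * t) ^ Fintype.card F ^ e = algebraMap F K (y k) := by
  classical
  let b : Module.Basis (Fin m) F K := Module.Basis.mk h1 h2.ge
  let d := (Algebra.traceForm F K).dualBasis (traceForm_nondegenerate F K) b
  refine ⟨d.equivFun.symm y, fun k => ?_⟩
  have hk : Algebra.traceForm F K (d.equivFun.symm y) (b k) = y k := by
    rw [← LinearMap.BilinForm.dualBasis_repr_apply (traceForm_nondegenerate F K) b]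
    change d.equivFun (d.equivFun.symm y) k = y k
    rw [LinearEquiv.apply_symm_apply]
  have hfr : Module.finrank F K = m := by
    simpa using Module.finrank_eq_card_basis b
  have := FiniteField.algebraMap_trace_eq_sum_pow F K (A k * d.equivFun.symm y)
  rw [hfr, Nat.card_eq_fintype_card] at this
  rw [← this, ← hk, Algebra.traceForm_apply, mul_comm]
  simp [b]

/-- **Algebraically repelling trace curves.**
Let `F = F_q ⊆ K = F_{q^m}`, `c ≤ s < q`. Let `𝔞_1, …, 𝔞_M ∈ K^m` be bases of `K` over `F` in
`(s,c)`-general position: no nonzero `R ∈ K[X_1,…,X_m]` of total degree at most `s` vanishes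
at every `𝔞_i` with multiplicity at least `c`. If `Q ∈ K[X_1,…,X_m]` has total degree `< s·q`
and `Q^{(l)} ∘ γ_{𝔞_i} = 0` for every `i` and every `l` with `wt(l) < c`, where
`γ_{𝔞}(T) = (∑_{e<m} a_k^{q^e} T^{q^e})_k`, then `Q = 0`. -/
theorem repelling_trace_curves {F K : Type*} [Field F] [Fintype F]
    [Field K] [Fintype K] [Algebra F K] {m M : ℕ} (c s : ℕ)
    (hc : 0 < c) (hcs : c ≤ s) (hsq : s < Fintype.card F)
    (A : Fin M → Fin m → K)
    (hA : ∀ i, LinearIndependent F (A i) ∧ Submodule.span F (Set.range (A i)) = ⊤)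
    (hgen : ¬ ∃ R : MvPolynomial (Fin m) K, R ≠ 0 ∧ R.totalDegree ≤ s ∧
      ∀ i, (c : ℕ∞) ≤ mvMult R (A i))
    (Q : MvPolynomial (Fin m) K) (hdeg : Q.totalDegree < s * Fintype.card F)
    (hvan : ∀ i : Fin M, ∀ l : Fin m → ℕ, ∑ k, l k < c →
      MvPolynomial.aeval
        (fun k => ∑ e ∈ Finset.range m,
          Polynomial.C (A i k ^ Fintype.card F ^ e) * Polynomial.X ^ Fintype.card F ^ e)
        (mvHasseDeriv l Q) = (0 : Polynomial K)) :
    Q = 0 := by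
  classical
  set q := Fintype.card F with hq
  have hq0 : 0 < q := Fintype.card_pos
  let S : Finset K := Finset.univ.image (algebraMap F K)
  have hS : S.card = q := by
    rw [Finset.card_image_of_injective _ (algebraMap F K).injective, Finset.card_univ]
  apply rtc_grid S (by omega) m s Q (by rw [hS]; exact hdeg)
  intro x hx i hi
  have hy : ∀ k, ∃ y : F, algebraMap F K y = x k := fun k => by
    simpa [S] using hx k
  choose y hy using hy
  set H := MvPolynomial.homogeneousComponent i.degree (rtcShift x Q) with hH
  have hH0 : H = 0 := by
    by_contra hne
    refine hgen ⟨H, hne, ?_, fun r => ?_⟩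
    · exact (MvPolynomial.homogeneousComponent_isHomogeneous _ _).totalDegree_le.trans hi.le
    · apply le_sSup
      intro l hl
      have hl : ∑ k, l k < c := by exact_mod_cast hl
      have hm : 0 < m := by
        rcases Nat.eq_zero_or_pos m with h0 | h0
        · subst h0
          have := (hA r).2
          rw [Set.range_eq_empty, Submodule.span_empty] at this
          exact absurd this bot_ne_top
        · exact h0
      set l' := Finsupp.equivFunOnFinite.symm l with hl'
      obtain ⟨t, ht⟩ := rtc_surj (A r) (hA r).1 (hA r).2 y
      -- the translated derivative vanishes on the curve
      have hz : MvPolynomial.aeval (fun k => rtcG q m (A r k)) (mvHasseDeriv l (rtcShift x Q))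
          = (0 : Polynomial K) := by
        have h0 := congrArg (fun p => Polynomial.aeval (Polynomial.X + Polynomial.C t) p)
          (hvan r l hl)
        simp only [map_zero] at h0
        rw [← h0, rtc_hasse_shift, rtcShift, ← AlgHom.comp_apply, ← AlgHom.comp_apply]
        congr 1
        apply MvPolynomial.algHom_ext
        intro k
        have h1 := rtcG_comp F m (A r k) t
        rw [ht, hy] at h1
        simp only [AlgHom.comp_apply, MvPolynomial.aeval_X, map_add]
        rw [← MvPolynomial.algebraMap_eq, AlgHom.commutes]
        exact h1.symm
      have hcoef : ∀ j < q, MvPolynomial.eval (A r)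
          (MvPolynomial.homogeneousComponent j (mvHasseDeriv l (rtcShift x Q))) = 0 := by
        intro j hj
        rw [← rtc_coeff_line]
        have hd := rtc_dvd_aeval (Polynomial.X ^ q) (fun k => rtcG q m (A r k))
          (fun k => Polynomial.C (A r k) * Polynomial.X)
          (fun k => rtcG_mod q m hm _) (mvHasseDeriv l (rtcShift x Q))
        rw [hz, zero_sub, dvd_neg, Polynomial.X_pow_dvd_iff] at hd
        exact hd j hj
      have key : mvHasseDeriv l H = if l'.degree ≤ i.degree then
          MvPolynomial.homogeneousComponent (i.degree - l'.degree)
            (mvHasseDeriv l (rtcShift x Q)) else 0 := by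
        ext e
        rw [rtc_hasse_eq, hH, rtc_hasse_hom, ← hl']
        split_ifs with h1 h2 h2
        · rw [MvPolynomial.coeff_homogeneousComponent, if_pos (by omega), rtc_hasse_eq]
        · omega
        · rw [MvPolynomial.coeff_homogeneousComponent, if_neg (by omega)]
        · simp
      rw [key]
      split_ifs with h1
      · exact hcoef _ (by omega)
      · simp
  have := congrArg (MvPolynomial.coeff i) hH0
  rw [hH, MvPolynomial.coeff_homogeneousComponent, if_pos rfl] at this
  simpa using this
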